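/- Let r ≥ 1 and let i, j, k, l, m be integers with 1 ≤ i < j ≤ r, 0 ≤ l ≤ r-1, m ≥ 0, 1 ≤ k ≤ mr+l, k < j - i, and i ≤ l + j - r ≤ k + i - 1. Then in ℚ(x_1,…,x_r) one has X(i,k) · X(j, mr+l) = X(j, (m+1)r+k+i-j) · X(i, l+j-r-i) + X(j, (m+1)r+i-j-1) · X(l+j+1, k+r+i-l-j-1). -/

import Mathlib

/-- The ambient field `ℚ(x_1, …, x_r)`, realized as the fraction field of the
polynomial ring over `ℚ` in variables indexed by `ZMod r` (so indices are
automatically read modulo `r`). -/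
noncomputable abbrev CyclicField (r : ℕ) : Type :=
  FractionRing (MvPolynomial (ZMod r) ℚ)

/-- The variable `x_i` for `i : ℤ`, with `x_{i+r} = x_i`. -/
noncomputable def xv (r : ℕ) (i : ℤ) : CyclicField r :=
  algebraMap (MvPolynomial (ZMod r) ℚ) (CyclicField r) (MvPolynomial.X (i : ZMod r))

/-- The generalized cluster variable `X(l, n)` (the image of the indecomposable
nilpotent representation `E_l[n]` under the Caldero–Chapoton map):
`X(l,0) = 1` and, for `n ≥ 1`,
`X(l,n) = x_{l+n}/x_l + Σ_{k=1}^{n-1} (x_{l+n}·x_{l+r-1})/(x_{l+k-1}·x_{l+k}) + x_{l+r-1}/x_{l+n-1}`. -/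
noncomputable def Xgcv (r : ℕ) (l : ℤ) : ℕ → CyclicField r
  | 0 => 1
  | n + 1 =>
      xv r (l + n + 1) / xv r l
        + ∑ k ∈ Finset.Icc 1 n,
            (xv r (l + n + 1) * xv r (l + r - 1)) / (xv r (l + k - 1) * xv r (l + k))
        + xv r (l + r - 1) / xv r (l + n)

theorem xv_ne (r : ℕ) (i : ℤ) : xv r i ≠ 0 := by
  unfold xv
  intro h
  rw [FaithfulSMul.algebraMap_eq_zero_iff] at h
  exact MvPolynomial.X_ne_zero _ h

theorem xv_shift (r : ℕ) (a b M : ℤ) (h : a = b + M * r) : xv r a = xv r b := by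
  subst h
  simp [xv]

/-- Discrete potential with increments `1/(x_t x_{t+1})`. -/
noncomputable def pot (r : ℕ) (t : ℤ) : CyclicField r :=
  ∑ s ∈ Finset.range t.toNat, 1 / (xv r (s : ℤ) * xv r ((s : ℤ) + 1))

theorem pot_succ (r : ℕ) (t : ℤ) (ht : 0 ≤ t) :
    pot r (t + 1) = pot r t + 1 / (xv r t * xv r (t + 1)) := by
  lift t to ℕ using ht
  have h1 : ((t : ℤ) + 1).toNat = t + 1 := by omega
  simp only [pot, h1, Int.toNat_natCast]
  rw [Finset.sum_range_succ]

theorem sum_pot (r : ℕ) (l : ℤ) (hl : 1 ≤ l) (c : CyclicField r) (n : ℕ) :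
    ∑ k ∈ Finset.Icc 1 n, c / (xv r (l + k - 1) * xv r (l + k))
      = c * (pot r (l + n) - pot r l) := by
  induction n with
  | zero => simp
  | succ n ih =>
    rw [Finset.sum_Icc_succ_top (by omega), ih]
    have h := pot_succ r (l + n) (by omega)
    have e1 : l + ((n + 1 : ℕ) : ℤ) = l + n + 1 := by push_cast; ring
    have e2 : l + (n : ℤ) + 1 - 1 = l + n := by ring
    rw [e1, e2, h]
    ring

theorem Xgcv_eq (r : ℕ) (l : ℤ) (hl : 1 ≤ l) (n : ℕ) :
    Xgcv r l n = xv r (l - 1) * xv r (l + n) * (pot r (l + n) - pot r (l - 1)) := by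
  have h0 := pot_succ r (l - 1) (by omega)
  rw [sub_add_cancel] at h0
  have n1 := xv_ne r l
  have n2 := xv_ne r (l - 1)
  cases n with
  | zero =>
    simp only [Xgcv, Nat.cast_zero, add_zero]
    rw [h0]
    field_simp
    ring
  | succ n =>
    have n3 := xv_ne r (l + n)
    have n4 := xv_ne r (l + n + 1)
    have h := pot_succ r (l + n) (by omega)
    have e1 : l + ((n + 1 : ℕ) : ℤ) = l + n + 1 := by push_cast; ring
    have e2 : xv r (l + r - 1) = xv r (l - 1) := xv_shift r _ _ 1 (by ring)
    simp only [Xgcv]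
    rw [sum_pot r l hl, e1, h, e2, h0]
    field_simp
    ring

theorem Xgcv_shift (r : ℕ) (l M : ℤ) (n : ℕ) : Xgcv r l n = Xgcv r (l + M * r) n := by
  cases n with
  | zero => rfl
  | succ n =>
    simp only [Xgcv]
    have h : ∀ a : ℤ, xv r (a + M * r) = xv r a := fun a => xv_shift r _ _ M rfl
    have s1 : ∀ a : ℤ, l + M * r + a = l + a + M * r := fun a => by ring
    have s2 : ∀ a : ℤ, a + M * r - 1 = a - 1 + M * r := fun a => by ring
    have s3 : l + n + M * r + 1 = l + n + 1 + M * r := by ring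
    simp only [s1, s2, s3, h]

/-- `X(l,n)` through its shifted end points. -/
theorem Xgcv_D (r : ℕ) (l n M a b : ℤ) (hn : 0 ≤ n) (ha : l + M * r - 1 = a)
    (hb : l + M * r + n = b) (h0 : 0 ≤ a) :
    Xgcv r l n.toNat = xv r a * xv r b * (pot r b - pot r a) := by
  rw [Xgcv_shift r l M, Xgcv_eq r _ (by omega), Int.toNat_of_nonneg hn, ha, hb]

/-- inductive multiplication formula, case `i < j`, `k < j - i`,
`i ≤ l + j - r ≤ k + i - 1`. -/
theorem stmt6 (r : ℕ) (hr : 1 ≤ r) (i j k l m : ℤ)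
    (hi : 1 ≤ i) (hij : i < j) (hj : j ≤ r)
    (hl0 : 0 ≤ l) (hl : l ≤ (r : ℤ) - 1) (hm : 0 ≤ m)
    (hk1 : 1 ≤ k) (hk2 : k ≤ m * r + l)
    (hk : k < j - i) (hlj1 : i ≤ l + j - r) (hlj2 : l + j - r ≤ k + i - 1) :
    Xgcv r i k.toNat * Xgcv r j (m * r + l).toNat =
      Xgcv r j ((m + 1) * r + k + i - j).toNat * Xgcv r i (l + j - r - i).toNat
        + Xgcv r j ((m + 1) * r + i - j - 1).toNat
            * Xgcv r (l + j + 1) (k + r + i - l - j - 1).toNat := by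
  have hmr : 0 ≤ m * r := by positivity
  have e : (m + 1) * (r : ℤ) = m * r + r := by ring
  rw [Xgcv_D r i k (m + 1) (m * r + r + i - 1) (m * r + r + i + k),
    Xgcv_D r j (m * r + l) 0 (j - 1) (m * r + l + j),
    Xgcv_D r j ((m + 1) * r + k + i - j) 0 (j - 1) (m * r + r + i + k),
    Xgcv_D r i (l + j - r - i) (m + 1) (m * r + r + i - 1) (m * r + l + j),
    Xgcv_D r j ((m + 1) * r + i - j - 1) 0 (j - 1) (m * r + r + i - 1),
    Xgcv_D r (l + j + 1) (k + r + i - l - j - 1) m (m * r + l + j) (m * r + r + i + k)]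
  · ring
  all_goals linarith
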